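/- arXiv:2501.17488 — 2 statements merged into one kernel-verified Lean document; each statement's English description precedes it below -/
import Mathlib

section
/- Under the LEN setup, assume F is monotone, F' is L-Lipschitz, M ≥ 4mL, and there exists z* ∈ E with F(z*) = 0; set R := ‖z_0 − z*‖. Then for every integer T ≥ 1, the averaged output z_out := (Σ_{t=0}^{T−1} η_t z_{t+1/2}) / (Σ_{t=0}^{T−1} η_t) satisfies the restricted gap bound: for every z ∈ E with ‖z − z*‖ ≤ 3R, ⟨F(z), z_out − z⟩ ≤ 16·M·R³ / T^{3/2}. -/
open scoped RealInnerProductSpace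

/-!
An extragradient step loses at most `‖w t - z (t + 1)‖ ^ 2 - ‖w t - z t‖ ^ 2` in the telescoping
estimate for `‖z t - u‖ ^ 2`, where `w t` stands for the half iterate `z_{t+1/2}`. By the Newton
equation and the Lipschitz bound on `F'`, the loss term `‖w t - z (t + 1)‖` is at most
`(L / M) (‖w t - z t‖ + ‖z t - z (π t)‖)`, and the distance to the snapshot `z (π t)` is a sum of
fewer than `m` steps. Hence `M ≥ 4 m L` makes the total loss at most half of
`∑ ‖w t - z t‖ ^ 2`. The other half pays twice: with `u = z*` it bounds `∑ ‖w t - z t‖ ^ 2` by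
`2 R ^ 2`, and since `η t` is inversely proportional to `‖w t - z t‖`, two applications of the
Cauchy-Schwarz inequality turn this into the lower bound `∑ η t ≥ T ^ (3 / 2) / (2 M R)`.
-/

section General

theorem norm_image_sub_sub_fderiv_le_mul_sq {E G : Type*} [NormedAddCommGroup E] [NormedSpace ℝ E]
    [NormedAddCommGroup G] [NormedSpace ℝ G] {F : E → G} {F' : E → E →L[ℝ] G} {L : ℝ} {x : E}
    (hdiff : ∀ u, HasFDerivAt F (F' u) u) (hLip : ∀ u, ‖F' u - F' x‖ ≤ L * ‖u - x‖) (y : E) :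
    ‖F y - F x - F' x (y - x)‖ ≤ L * ‖y - x‖ ^ 2 := by
  have hbound : ∀ u ∈ segment ℝ x y, ‖F' u - F' x‖ ≤ L * ‖y - x‖ := by
    rw [segment_eq_image']
    rintro _ ⟨θ, hθ, rfl⟩
    calc ‖F' (x + θ • (y - x)) - F' x‖ ≤ L * ‖x + θ • (y - x) - x‖ := hLip _
      _ = θ * (L * ‖y - x‖) := by
        rw [add_sub_cancel_left, norm_smul, Real.norm_of_nonneg hθ.1]; ring
      _ ≤ L * ‖y - x‖ := mul_le_of_le_one_left ((norm_nonneg _).trans (hLip y)) hθ.2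
  calc ‖F y - F x - F' x (y - x)‖ ≤ L * ‖y - x‖ * ‖y - x‖ :=
        (convex_segment x y).norm_image_sub_le_of_norm_hasFDerivWithin_le'
          (fun u _ => (hdiff u).hasFDerivWithinAt) hbound
          (left_mem_segment ℝ x y) (right_mem_segment ℝ x y)
    _ = L * ‖y - x‖ ^ 2 := by ring

theorem sum_range_sum_Ico_le_nsmul_sum_range {α : Type*} [AddCommMonoid α] [PartialOrder α]
    [IsOrderedAddMonoid α] {a : ℕ → α} (ha : ∀ i, 0 ≤ a i) {π : ℕ → ℕ} {m : ℕ}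
    (hπ : ∀ t, t < π t + m) (T : ℕ) :
    ∑ t ∈ Finset.range T, ∑ i ∈ Finset.Ico (π t) t, a i ≤ m • ∑ i ∈ Finset.range T, a i := by
  have hcard (i : ℕ) : ((Finset.range T).filter fun t => i ∈ Finset.Ico (π t) t).card ≤ m := by
    have hsub : ((Finset.range T).filter fun t => i ∈ Finset.Ico (π t) t)
        ⊆ Finset.Ico i (i + m) := by
      intro t ht
      have := hπ t
      simp only [Finset.mem_filter, Finset.mem_Ico] at ht ⊢
      lia
    simpa using Finset.card_le_card hsub
  calc ∑ t ∈ Finset.range T, ∑ i ∈ Finset.Ico (π t) t, a i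
      = ∑ i ∈ Finset.range T, ∑ t ∈ Finset.range T with i ∈ Finset.Ico (π t) t, a i := by
        refine Finset.sum_comm' fun t i => ?_
        simp only [Finset.mem_range, Finset.mem_filter, Finset.mem_Ico]
        lia
    _ ≤ ∑ i ∈ Finset.range T, m • a i := by
        refine Finset.sum_le_sum fun i _ => ?_
        rw [Finset.sum_const]
        exact nsmul_le_nsmul_left (ha i) (hcard i)
    _ = m • ∑ i ∈ Finset.range T, a i := Finset.sum_nsmul _ _ _

theorem norm_sub_sq_le_mul_sum_Ico {E : Type*} [SeminormedAddCommGroup E] (z : ℕ → E) {a b : ℕ}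
    (hab : a ≤ b) :
    ‖z b - z a‖ ^ 2 ≤ (b - a : ℕ) * ∑ i ∈ Finset.Ico a b, ‖z (i + 1) - z i‖ ^ 2 := by
  calc ‖z b - z a‖ ^ 2 = ‖∑ i ∈ Finset.Ico a b, (z (i + 1) - z i)‖ ^ 2 := by
        rw [Finset.sum_Ico_sub z hab]
    _ ≤ (∑ i ∈ Finset.Ico a b, ‖z (i + 1) - z i‖) ^ 2 := by gcongr; exact norm_sum_le _ _
    _ ≤ (b - a : ℕ) * ∑ i ∈ Finset.Ico a b, ‖z (i + 1) - z i‖ ^ 2 := by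
        simpa only [Nat.card_Ico] using
          sq_sum_le_card_mul_sum_sq (s := Finset.Ico a b) (f := fun i => ‖z (i + 1) - z i‖)

theorem sum_norm_sub_delayed_sq_le {E : Type*} [SeminormedAddCommGroup E] (z : ℕ → E)
    {π : ℕ → ℕ} {m : ℕ} (hπ : ∀ t, π t ≤ t ∧ t < π t + m) (T : ℕ) :
    ∑ t ∈ Finset.range T, ‖z t - z (π t)‖ ^ 2
      ≤ m ^ 2 * ∑ t ∈ Finset.range T, ‖z (t + 1) - z t‖ ^ 2 := by
  calc ∑ t ∈ Finset.range T, ‖z t - z (π t)‖ ^ 2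
      ≤ ∑ t ∈ Finset.range T, m * ∑ i ∈ Finset.Ico (π t) t, ‖z (i + 1) - z i‖ ^ 2 := by
        refine Finset.sum_le_sum fun t _ => (norm_sub_sq_le_mul_sum_Ico z (hπ t).1).trans ?_
        have hlag : t - π t ≤ m := by have := hπ t; lia
        gcongr
    _ = m * ∑ t ∈ Finset.range T, ∑ i ∈ Finset.Ico (π t) t, ‖z (i + 1) - z i‖ ^ 2 := by
        rw [Finset.mul_sum]
    _ ≤ m * (m * ∑ t ∈ Finset.range T, ‖z (t + 1) - z t‖ ^ 2) := by
        rw [← nsmul_eq_mul m (∑ t ∈ Finset.range T, ‖z (t + 1) - z t‖ ^ 2)]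
        gcongr
        exact sum_range_sum_Ico_le_nsmul_sum_range (fun _ => sq_nonneg _) (fun t => (hπ t).2) T
    _ = m ^ 2 * ∑ t ∈ Finset.range T, ‖z (t + 1) - z t‖ ^ 2 := by ring

theorem card_pow_three_le_sum_inv_sq_mul_sum_sq {ι K : Type*} [Field K] [LinearOrder K]
    [IsStrictOrderedRing K] {s : Finset ι} {r : ι → K} (hr : ∀ i ∈ s, 0 < r i) :
    (s.card : K) ^ 3 ≤ (∑ i ∈ s, (r i)⁻¹) ^ 2 * ∑ i ∈ s, r i ^ 2 := by
  rcases s.eq_empty_or_nonempty with rfl | hs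
  · simp
  have hcauchy : (s.card : K) ^ 2 ≤ (∑ i ∈ s, (r i)⁻¹) * ∑ i ∈ s, r i := by
    have h := Finset.sum_sq_le_sum_mul_sum_of_sq_le_mul s (r := fun _ => 1)
      (fun i hi => (inv_pos.2 (hr i hi)).le) (fun i hi => (hr i hi).le)
      (fun i hi => by rw [inv_mul_cancel₀ (hr i hi).ne', one_pow])
    simpa using h
  refine le_of_mul_le_mul_left ?_ (Nat.cast_pos.2 hs.card_pos : (0 : K) < s.card)
  calc (s.card : K) * s.card ^ 3 = (s.card ^ 2) ^ 2 := by ring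
    _ ≤ ((∑ i ∈ s, (r i)⁻¹) * ∑ i ∈ s, r i) ^ 2 := by gcongr
    _ = (∑ i ∈ s, (r i)⁻¹) ^ 2 * (∑ i ∈ s, r i) ^ 2 := mul_pow _ _ _
    _ ≤ (∑ i ∈ s, (r i)⁻¹) ^ 2 * (s.card * ∑ i ∈ s, r i ^ 2) := by
        gcongr
        exact sq_sum_le_card_mul_sum_sq
    _ = s.card * ((∑ i ∈ s, (r i)⁻¹) ^ 2 * ∑ i ∈ s, r i ^ 2) := by ring

variable {E : Type*} [SeminormedAddCommGroup E] [InnerProductSpace ℝ E]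

theorem two_mul_inner_sub_sub_eq (x y w u : E) :
    2 * ⟪x - y, w - u⟫ = ‖x - u‖ ^ 2 - ‖y - u‖ ^ 2 + ‖w - y‖ ^ 2 - ‖w - x‖ ^ 2 := by
  simp only [norm_sub_sq_real, inner_sub_left, inner_sub_right, real_inner_comm w]
  ring

theorem two_mul_sum_inner_sub_succ_le (z w : ℕ → E) (u : E) (T : ℕ) :
    2 * ∑ t ∈ Finset.range T, ⟪z t - z (t + 1), w t - u⟫
      ≤ ‖z 0 - u‖ ^ 2 + ∑ t ∈ Finset.range T, ‖w t - z (t + 1)‖ ^ 2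
        - ∑ t ∈ Finset.range T, ‖w t - z t‖ ^ 2 := by
  simp only [Finset.mul_sum, two_mul_inner_sub_sub_eq, Finset.sum_sub_distrib,
    Finset.sum_add_distrib]
  rw [← Finset.sum_sub_distrib, Finset.sum_range_sub' fun t => ‖z t - u‖ ^ 2]
  linarith [sq_nonneg ‖z T - u‖]

theorem sum_mul_inner_centerMass_sub {ι : Type*} {s : Finset ι} {c : ι → ℝ}
    (hc : ∑ i ∈ s, c i ≠ 0) (x : ι → E) (v u : E) :
    (∑ i ∈ s, c i) * ⟪v, s.centerMass c x - u⟫ = ∑ i ∈ s, c i * ⟪v, x i - u⟫ := by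
  simp only [Finset.centerMass, inner_sub_right, mul_sub, real_inner_smul_right, inner_sum,
    Finset.sum_sub_distrib, Finset.sum_mul, mul_inv_cancel_left₀ hc]

end General

/-- Iterates of the lazy extra-Newton method LEN for the operator `F` with derivative `F'` and
regularization `M`. Here `w t` is the half iterate `z_{t+1/2}` and `π t` is the index of the
iterate at which the derivative used in step `t` was evaluated, an arbitrary schedule. -/
structure IsLENTrajectory {E : Type*} [NormedAddCommGroup E] [NormedSpace ℝ E] (F : E → E)
    (F' : E → E →L[ℝ] E) (M : ℝ) (π : ℕ → ℕ) (z w : ℕ → E) (η : ℕ → ℝ) : Prop where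
  half_ne : ∀ t, w t ≠ z t
  newton : ∀ t, F (z t) + F' (z (π t)) (w t - z t) + (M * ‖w t - z t‖) • (w t - z t) = 0
  stepsize : ∀ t, η t = 1 / (M * ‖z t - w t‖)
  update : ∀ t, z (t + 1) = z t - η t • F (w t)

namespace IsLENTrajectory

section NormedSpace

variable {E : Type*} [NormedAddCommGroup E] [NormedSpace ℝ E] {F : E → E}
  {F' : E → E →L[ℝ] E} {L M : ℝ} {m : ℕ} {π : ℕ → ℕ} {z w : ℕ → E} {η : ℕ → ℝ}

theorem norm_half_sub_pos (h : IsLENTrajectory F F' M π z w η) (t : ℕ) : 0 < ‖w t - z t‖ :=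
  norm_sub_pos_iff.2 (h.half_ne t)

theorem stepsize_eq_inv (h : IsLENTrajectory F F' M π z w η) (t : ℕ) :
    η t = (M * ‖w t - z t‖)⁻¹ := by
  rw [h.stepsize, one_div, norm_sub_rev]

theorem stepsize_pos (h : IsLENTrajectory F F' M π z w η) (hM : 0 < M) (t : ℕ) : 0 < η t := by
  have := h.norm_half_sub_pos t
  rw [h.stepsize_eq_inv]
  positivity

theorem half_sub_succ_eq (h : IsLENTrajectory F F' M π z w η) (hM : 0 < M) (t : ℕ) :
    w t - z (t + 1) = η t • ((F (w t) - F (z t) - F' (z t) (w t - z t))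
      + (F' (z t) - F' (z (π t))) (w t - z t)) := by
  have hη : η t * (M * ‖w t - z t‖) = 1 := by
    rw [h.stepsize_eq_inv, inv_mul_cancel₀ (mul_pos hM (h.norm_half_sub_pos t)).ne']
  have hresidual : (F (w t) - F (z t) - F' (z t) (w t - z t))
      + (F' (z t) - F' (z (π t))) (w t - z t)
      = F (w t) + (M * ‖w t - z t‖) • (w t - z t) := by
    rw [← sub_eq_zero, ← neg_eq_zero, ← h.newton t, sub_apply]
    abel
  rw [hresidual, smul_add, smul_smul, hη, one_smul, h.update]
  abel

theorem mul_norm_half_sub_succ_le (h : IsLENTrajectory F F' M π z w η) (hM : 0 < M)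
    (hdiff : ∀ x, HasFDerivAt F (F' x) x) (hLip : ∀ x y, ‖F' x - F' y‖ ≤ L * ‖x - y‖) (t : ℕ) :
    M * ‖w t - z (t + 1)‖ ≤ L * (‖w t - z t‖ + ‖z t - z (π t)‖) := by
  have hd := h.norm_half_sub_pos t
  have htaylor := norm_image_sub_sub_fderiv_le_mul_sq hdiff (hLip · (z t)) (w t)
  have hdelay := (F' (z t) - F' (z (π t))).le_of_opNorm_le (hLip _ _) (w t - z t)
  rw [h.half_sub_succ_eq hM, norm_smul, Real.norm_of_nonneg (h.stepsize_pos hM t).le,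
    h.stepsize_eq_inv]
  calc M * ((M * ‖w t - z t‖)⁻¹ * ‖(F (w t) - F (z t) - F' (z t) (w t - z t))
        + (F' (z t) - F' (z (π t))) (w t - z t)‖)
      ≤ M * ((M * ‖w t - z t‖)⁻¹ *
          (L * ‖w t - z t‖ ^ 2 + L * ‖z t - z (π t)‖ * ‖w t - z t‖)) := by
        gcongr
        exact (norm_add_le _ _).trans (add_le_add htaylor hdelay)
    _ = L * (‖w t - z t‖ + ‖z t - z (π t)‖) := by field_simp

theorem mul_norm_half_sub_succ_sq_le (h : IsLENTrajectory F F' M π z w η) (hM : 0 < M)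
    (hML : 4 * m * L ≤ M) (hdiff : ∀ x, HasFDerivAt F (F' x) x)
    (hLip : ∀ x y, ‖F' x - F' y‖ ≤ L * ‖x - y‖) (t : ℕ) :
    8 * m ^ 2 * ‖w t - z (t + 1)‖ ^ 2 ≤ ‖w t - z t‖ ^ 2 + ‖z t - z (π t)‖ ^ 2 := by
  have hlinear : 4 * m * ‖w t - z (t + 1)‖ ≤ ‖w t - z t‖ + ‖z t - z (π t)‖ := by
    refine le_of_mul_le_mul_left ?_ hM
    calc M * (4 * m * ‖w t - z (t + 1)‖) = 4 * m * (M * ‖w t - z (t + 1)‖) := by ring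
      _ ≤ 4 * m * (L * (‖w t - z t‖ + ‖z t - z (π t)‖)) := by
        gcongr ?_ * ?_
        exact h.mul_norm_half_sub_succ_le hM hdiff hLip t
      _ = 4 * m * L * (‖w t - z t‖ + ‖z t - z (π t)‖) := by ring
      _ ≤ M * (‖w t - z t‖ + ‖z t - z (π t)‖) := by gcongr
  have hsq : (4 * m * ‖w t - z (t + 1)‖) ^ 2 ≤ (‖w t - z t‖ + ‖z t - z (π t)‖) ^ 2 := by gcongr
  linarith [add_sq_le (a := ‖w t - z t‖) (b := ‖z t - z (π t)‖)]

theorem two_mul_sum_norm_half_sub_succ_sq_le (h : IsLENTrajectory F F' M π z w η) (hM : 0 < M)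
    (hML : 4 * m * L ≤ M) (hdiff : ∀ x, HasFDerivAt F (F' x) x)
    (hLip : ∀ x y, ‖F' x - F' y‖ ≤ L * ‖x - y‖) (hπ : ∀ t, π t ≤ t ∧ t < π t + m) (T : ℕ) :
    2 * ∑ t ∈ Finset.range T, ‖w t - z (t + 1)‖ ^ 2 ≤ ∑ t ∈ Finset.range T, ‖w t - z t‖ ^ 2 := by
  set S := ∑ t ∈ Finset.range T, ‖w t - z t‖ ^ 2
  set C := ∑ t ∈ Finset.range T, ‖w t - z (t + 1)‖ ^ 2
  set D := ∑ t ∈ Finset.range T, ‖z (t + 1) - z t‖ ^ 2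
  have hm : (1 : ℝ) ≤ m := by exact_mod_cast show 1 ≤ m by have := hπ 0; lia
  have hS : 0 ≤ S := Finset.sum_nonneg fun _ _ => sq_nonneg _
  have hstep : D ≤ 2 * (S + C) := by
    simp only [D, S, C, ← Finset.sum_add_distrib, Finset.mul_sum]
    refine Finset.sum_le_sum fun t _ => le_trans ?_ add_sq_le
    gcongr
    simpa only [norm_sub_rev, add_comm] using
      norm_sub_le_norm_sub_add_norm_sub (z (t + 1)) (w t) (z t)
  have hcorrection : 8 * m ^ 2 * C ≤ S + m ^ 2 * D := by
    refine le_trans ?_ (add_le_add_right (sum_norm_sub_delayed_sq_le z hπ T) S)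
    simp only [S, C, ← Finset.sum_add_distrib, Finset.mul_sum]
    exact Finset.sum_le_sum fun t _ => h.mul_norm_half_sub_succ_sq_le hM hML hdiff hLip t
  have hcancel : 8 * C ≤ S + D := by
    refine le_of_mul_le_mul_left ?_ (by positivity : (0 : ℝ) < m ^ 2)
    linarith [le_mul_of_one_le_left hS (one_le_pow₀ hm (n := 2))]
  linarith

end NormedSpace

section InnerProductSpace

variable {E : Type*} [NormedAddCommGroup E] [InnerProductSpace ℝ E] {F : E → E}
  {F' : E → E →L[ℝ] E} {L M : ℝ} {m : ℕ} {π : ℕ → ℕ} {z w : ℕ → E} {η : ℕ → ℝ}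

theorem sum_stepsize_mul_inner_le (h : IsLENTrajectory F F' M π z w η) (hM : 0 < M)
    (hmono : ∀ x y, 0 ≤ ⟪F x - F y, x - y⟫) (u : E) (T : ℕ) :
    ∑ t ∈ Finset.range T, η t * ⟪F u, w t - u⟫
      ≤ ∑ t ∈ Finset.range T, ⟪z t - z (t + 1), w t - u⟫ := by
  refine Finset.sum_le_sum fun t _ => ?_
  have hFu : ⟪F u, w t - u⟫ ≤ ⟪F (w t), w t - u⟫ := by
    simpa only [inner_sub_left, sub_nonneg] using hmono (w t) u
  rw [h.update, sub_sub_cancel, real_inner_smul_left]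
  exact mul_le_mul_of_nonneg_left hFu (h.stepsize_pos hM t).le

variable (h : IsLENTrajectory F F' M π z w η) (hM : 0 < M) (hML : 4 * m * L ≤ M)
  (hdiff : ∀ x, HasFDerivAt F (F' x) x) (hLip : ∀ x y, ‖F' x - F' y‖ ≤ L * ‖x - y‖)
  (hmono : ∀ x y, 0 ≤ ⟪F x - F y, x - y⟫) (hπ : ∀ t, π t ≤ t ∧ t < π t + m)

include h hM hML hdiff hLip hmono hπ

theorem regret_add_sum_norm_half_sub_sq_le (u : E) (T : ℕ) :
    2 * ∑ t ∈ Finset.range T, η t * ⟪F u, w t - u⟫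
      + (∑ t ∈ Finset.range T, ‖w t - z t‖ ^ 2) / 2 ≤ ‖z 0 - u‖ ^ 2 := by
  linarith [h.sum_stepsize_mul_inner_le hM hmono u T, two_mul_sum_inner_sub_succ_le z w u T,
    h.two_mul_sum_norm_half_sub_succ_sq_le hM hML hdiff hLip hπ T]

theorem sum_norm_half_sub_sq_le {zstar : E} (hstar : F zstar = 0) (T : ℕ) :
    ∑ t ∈ Finset.range T, ‖w t - z t‖ ^ 2 ≤ 2 * ‖z 0 - zstar‖ ^ 2 := by
  have hregret := h.regret_add_sum_norm_half_sub_sq_le hM hML hdiff hLip hmono hπ zstar T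
  simp only [hstar, inner_zero_left, mul_zero, Finset.sum_const_zero] at hregret
  linarith

theorem rpow_three_halves_le_mul_sum_stepsize {zstar : E} (hstar : F zstar = 0) (T : ℕ) :
    (T : ℝ) ^ ((3 : ℝ) / 2) ≤ 2 * M * ‖z 0 - zstar‖ * ∑ t ∈ Finset.range T, η t := by
  set H := ∑ t ∈ Finset.range T, η t
  have hH : 0 ≤ H := Finset.sum_nonneg fun t _ => (h.stepsize_pos hM t).le
  have hinv : ∑ t ∈ Finset.range T, ‖w t - z t‖⁻¹ = M * H := by
    simp only [H, h.stepsize_eq_inv, mul_inv, ← Finset.mul_sum, mul_inv_cancel_left₀ hM.ne']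
  have hcauchy := card_pow_three_le_sum_inv_sq_mul_sum_sq (s := Finset.range T)
    fun t _ => h.norm_half_sub_pos t
  rw [Finset.card_range, hinv] at hcauchy
  refine le_of_sq_le_sq ?_ (by positivity)
  calc ((T : ℝ) ^ ((3 : ℝ) / 2)) ^ 2 = (T : ℝ) ^ 3 := by
        rw [← Real.rpow_mul_natCast T.cast_nonneg, ← Real.rpow_natCast]; norm_num
    _ ≤ (M * H) ^ 2 * ∑ t ∈ Finset.range T, ‖w t - z t‖ ^ 2 := hcauchy
    _ ≤ (M * H) ^ 2 * (2 * ‖z 0 - zstar‖ ^ 2) := by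
        gcongr
        exact h.sum_norm_half_sub_sq_le hM hML hdiff hLip hmono hπ hstar T
    _ ≤ (2 * M * ‖z 0 - zstar‖ * H) ^ 2 := by
        linarith [sq_nonneg (M * H * ‖z 0 - zstar‖)]

theorem inner_centerMass_sub_le {zstar : E} (hstar : F zstar = 0) {T : ℕ} (hT : 1 ≤ T) (u : E) :
    ⟪F u, (Finset.range T).centerMass η w - u⟫
      ≤ M * ‖z 0 - zstar‖ * ‖z 0 - u‖ ^ 2 / (T : ℝ) ^ ((3 : ℝ) / 2) := by
  set H := ∑ t ∈ Finset.range T, η t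
  have hH : 0 < H := Finset.sum_pos (fun t _ => h.stepsize_pos hM t) ⟨0, Finset.mem_range.2 hT⟩
  have hregret : 2 * (H * ⟪F u, (Finset.range T).centerMass η w - u⟫) ≤ ‖z 0 - u‖ ^ 2 := by
    rw [sum_mul_inner_centerMass_sub hH.ne']
    have hS : 0 ≤ ∑ t ∈ Finset.range T, ‖w t - z t‖ ^ 2 := Finset.sum_nonneg fun _ _ => sq_nonneg _
    linarith [h.regret_add_sum_norm_half_sub_sq_le hM hML hdiff hLip hmono hπ u T]
  calc ⟪F u, (Finset.range T).centerMass η w - u⟫ ≤ ‖z 0 - u‖ ^ 2 / (2 * H) := by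
        rw [le_div_iff₀ (by positivity)]; linarith
    _ ≤ M * ‖z 0 - zstar‖ * ‖z 0 - u‖ ^ 2 / (T : ℝ) ^ ((3 : ℝ) / 2) := by
        rw [div_le_div_iff₀ (by positivity) (by positivity)]
        calc ‖z 0 - u‖ ^ 2 * (T : ℝ) ^ ((3 : ℝ) / 2)
            ≤ ‖z 0 - u‖ ^ 2 * (2 * M * ‖z 0 - zstar‖ * H) := by
              gcongr
              exact h.rpow_three_halves_le_mul_sum_stepsize hM hML hdiff hLip hmono hπ hstar T
          _ = M * ‖z 0 - zstar‖ * ‖z 0 - u‖ ^ 2 * (2 * H) := by ring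

end InnerProductSpace

end IsLENTrajectory

theorem len_restricted_gap_bound_general {E : Type*} [NormedAddCommGroup E]
    [InnerProductSpace ℝ E] {F : E → E} {F' : E → E →L[ℝ] E} {L M : ℝ} {m : ℕ} {π : ℕ → ℕ}
    {z w : ℕ → E} {η : ℕ → ℝ} (h : IsLENTrajectory F F' M π z w η)
    (hdiff : ∀ x, HasFDerivAt F (F' x) x) (hLip : ∀ x y, ‖F' x - F' y‖ ≤ L * ‖x - y‖)
    (hmono : ∀ x y, 0 ≤ ⟪F x - F y, x - y⟫) (hMpos : 0 < M) (hM : 4 * m * L ≤ M)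
    (hπ : ∀ t, π t ≤ t ∧ t < π t + m) {zstar : E} (hstar : F zstar = 0) {T : ℕ} (hT : 1 ≤ T)
    {r : ℝ} {u : E} (hu : ‖u - zstar‖ ≤ r) :
    ⟪F u, (Finset.range T).centerMass η w - u⟫
      ≤ M * ‖z 0 - zstar‖ * (‖z 0 - zstar‖ + r) ^ 2 / (T : ℝ) ^ ((3 : ℝ) / 2) := by
  have hdist : ‖z 0 - u‖ ≤ ‖z 0 - zstar‖ + r := by
    linarith [norm_sub_le_norm_sub_add_norm_sub (z 0) zstar u, norm_sub_rev zstar u]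
  refine (h.inner_centerMass_sub_le hMpos hM hdiff hLip hmono hπ hstar hT u).trans ?_
  gcongr

/-- Theorem 1 (restricted gap bound for LEN): under the LEN setup with monotone `F`,
`L`-Lipschitz `F'`, `M ≥ 4 m L`, and a root `z*` of `F`, the averaged output satisfies
`⟨F(z), z_out − z⟩ ≤ 16 M R³ / T^{3/2}` for every `z` in the ball of radius `3R`
around `z*`. -/
theorem len_restricted_gap_bound
    {E : Type*} [NormedAddCommGroup E] [InnerProductSpace ℝ E] [FiniteDimensional ℝ E]
    (F : E → E) (F' : E → E →L[ℝ] E) (L M : ℝ) (m : ℕ) (hm : 1 ≤ m)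
    (hdiff : ∀ x : E, HasFDerivAt F (F' x) x)
    (hLip : ∀ x y : E, ‖F' x - F' y‖ ≤ L * ‖x - y‖)
    (hmono : ∀ x y : E, 0 ≤ ⟪F x - F y, x - y⟫)
    (hMpos : 0 < M) (hM : 4 * (m : ℝ) * L ≤ M)
    (z w : ℕ → E) (η : ℕ → ℝ)
    (hne : ∀ t, w t ≠ z t)
    (hnewton : ∀ t, F (z t) + F' (z (m * (t / m))) (w t - z t)
        + (M * ‖w t - z t‖) • (w t - z t) = 0)
    (hη : ∀ t, η t = 1 / (M * ‖z t - w t‖))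
    (hupdate : ∀ t, z (t + 1) = z t - η t • F (w t))
    (zstar : E) (hstar : F zstar = 0)
    (R : ℝ) (hR : R = ‖z 0 - zstar‖)
    (T : ℕ) (hT : 1 ≤ T)
    (zout : E)
    (hzout : zout = (∑ t ∈ Finset.range T, η t)⁻¹ • ∑ t ∈ Finset.range T, η t • w t) :
    ∀ zz : E, ‖zz - zstar‖ ≤ 3 * R →
      ⟪F zz, zout - zz⟫ ≤ 16 * M * R ^ 3 / (T : ℝ) ^ ((3 : ℝ) / 2) := by
  intro u hu
  have hlen : IsLENTrajectory F F' M (fun t => m * (t / m)) z w η := ⟨hne, hnewton, hη, hupdate⟩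
  have hlag (t : ℕ) : m * (t / m) ≤ t ∧ t < m * (t / m) + m :=
    ⟨Nat.mul_div_le t m, Nat.lt_mul_div_succ t hm⟩
  have hgap := len_restricted_gap_bound_general hlen hdiff hLip hmono hMpos hM hlag hstar hT hu
  rw [← hR] at hgap
  rw [hzout]
  exact hgap.trans_eq (by ring)
end

section
/- Let f : E → ℝ be convex and differentiable, fix z̄ ∈ E and γ > 0, let g(w) := f(w) + (γ/3)‖w − z̄‖³ with gradient ∇g, and let ẑ be a global minimizer of g (equivalently ∇g(ẑ) = 0). Then for every z ∈ E: ‖∇g(z)‖ ≥ (γ/2)‖z − ẑ‖². -/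
open scoped RealInnerProductSpace

/-! The regularizer `‖x - c‖ ^ p / p` is uniformly convex of degree `p`: its derivative is uniformly
monotone, with modulus `2 ^ (2 - p) * ‖x - y‖ ^ p`. Adding a convex function, whose derivative is
monotone, preserves this modulus, and dividing by `‖x - y‖` turns it into a lower bound on the norm
of the difference of the derivatives at two points. At a minimizer the derivative vanishes. -/

section ConvexDerivative

variable {E : Type*} [NormedAddCommGroup E] [NormedSpace ℝ E] {s : Set E} {f : E → ℝ} {x y : E}

lemma convexOn_hasFDerivWithinAt_apply_sub_le (hf : ConvexOn ℝ s f) (hx : x ∈ s) (hy : y ∈ s)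
    {φ : StrongDual ℝ E} (hφ : HasFDerivWithinAt f φ s x) : φ (y - x) ≤ f y - f x := by
  have hmaps : Set.MapsTo (AffineMap.lineMap x y) (Set.Icc (0 : ℝ) 1) s :=
    fun _ ht ↦ hf.1.lineMap_mem hx hy ht
  have hconv : ConvexOn ℝ (Set.Icc (0 : ℝ) 1) (f ∘ AffineMap.lineMap x y) :=
    (hf.comp_affineMap (AffineMap.lineMap x y)).subset hmaps (convex_Icc 0 1)
  have hderiv : HasDerivWithinAt (f ∘ AffineMap.lineMap x y) (φ (y - x)) (Set.Icc (0 : ℝ) 1) 0 :=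
    HasFDerivWithinAt.comp_hasDerivWithinAt 0 (by simpa using hφ)
      AffineMap.hasDerivWithinAt_lineMap hmaps
  simpa [slope_def_field] using
    hconv.le_slope_of_hasDerivWithinAt (by simp) (by simp) zero_lt_one hderiv

lemma convexOn_hasFDerivWithinAt_sub_apply_sub_nonneg (hf : ConvexOn ℝ s f) (hx : x ∈ s)
    (hy : y ∈ s) {φ ψ : StrongDual ℝ E} (hφ : HasFDerivWithinAt f φ s x)
    (hψ : HasFDerivWithinAt f ψ s y) : 0 ≤ (φ - ψ) (x - y) := by
  have hxy := convexOn_hasFDerivWithinAt_apply_sub_le hf hx hy hφ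
  have hyx := convexOn_hasFDerivWithinAt_apply_sub_le hf hy hx hψ
  rw [← neg_sub x y, map_neg] at hxy
  rw [sub_apply]
  linarith

end ConvexDerivative

section RealPower

variable {a b t p : ℝ}

lemma abs_sub_rpow_le_mul_rpow_sub_rpow (ha : 0 ≤ a) (hb : 0 ≤ b) (hp : 2 ≤ p) :
    |a - b| ^ p ≤ (a - b) * (a ^ (p - 1) - b ^ (p - 1)) := by
  wlog hba : b ≤ a generalizing a b
  · have := this hb ha (le_of_not_ge hba)
    rw [abs_sub_comm]
    linarith
  have hab : 0 ≤ a - b := sub_nonneg.2 hba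
  have hsuper : (a - b) ^ (p - 1) + b ^ (p - 1) ≤ a ^ (p - 1) := by
    simpa using Real.add_rpow_le_rpow_add hab hb (p := p - 1) (by linarith)
  calc |a - b| ^ p = (a - b) * (a - b) ^ (p - 1) := by
        rw [abs_of_nonneg hab, ← Real.rpow_one_add' hab (by linarith), add_sub_cancel]
    _ ≤ (a - b) * (a ^ (p - 1) - b ^ (p - 1)) := by
        gcongr
        linarith

lemma two_rpow_mul_add_rpow_le (ha : 0 ≤ a) (hb : 0 ≤ b) (hp : 2 ≤ p) :
    2 ^ (2 - p) * (a + b) ^ p ≤ (a + b) * (a ^ (p - 1) + b ^ (p - 1)) := by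
  have hab : 0 ≤ a + b := add_nonneg ha hb
  have hmean : (a + b) ^ (p - 1) ≤ 2 ^ (p - 2) * (a ^ (p - 1) + b ^ (p - 1)) := by
    lift a to NNReal using ha
    lift b to NNReal using hb
    have := NNReal.rpow_add_le_mul_rpow_add_rpow a b (p := p - 1) (by linarith)
    rw [show p - 1 - 1 = p - 2 by ring] at this
    exact_mod_cast this
  calc 2 ^ (2 - p) * (a + b) ^ p = (a + b) * (2 ^ (2 - p) * (a + b) ^ (p - 1)) := by
        rw [mul_left_comm, ← Real.rpow_one_add' hab (by linarith), add_sub_cancel]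
    _ ≤ (a + b) * (2 ^ (2 - p) * (2 ^ (p - 2) * (a ^ (p - 1) + b ^ (p - 1)))) := by gcongr
    _ = (a + b) * (a ^ (p - 1) + b ^ (p - 1)) := by
        rw [← mul_assoc (2 ^ (2 - p)), ← Real.rpow_add two_pos]
        simp

lemma mul_rpow_le_mul_sq_add_of_mem_Icc {u v A B C : ℝ} (hp : 2 ≤ p) (hC : 0 ≤ C) (hu : 0 ≤ u)
    (ht : t ∈ Set.Icc u v) (hCu : C * u ^ p ≤ A * u ^ 2 + B) (hCv : C * v ^ p ≤ A * v ^ 2 + B) :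
    C * t ^ p ≤ A * t ^ 2 + B := by
  have ht₀ : 0 ≤ t := hu.trans ht.1
  have hv : 0 ≤ v := ht₀.trans ht.2
  have hsq {r : ℝ} (hr : 0 ≤ r) : (r ^ 2) ^ (p / 2) = r ^ p := by
    rw [← Real.rpow_natCast_mul hr]
    ring_nf
  -- In the variable `r = t ^ 2`, the left side is convex and the right side affine.
  have hconv : ConvexOn ℝ (Set.Ici 0) (fun r : ℝ ↦ C * r ^ (p / 2) - A * r) :=
    ((convexOn_rpow (by linarith)).smul hC).sub
      ((LinearMap.mulLeft ℝ A).concaveOn (convex_Ici 0))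
  have hmax := hconv.le_max_of_mem_Icc (sq_nonneg u) (sq_nonneg v)
    ⟨pow_le_pow_left₀ hu ht.1 2, pow_le_pow_left₀ ht₀ ht.2 2⟩
  simp only [hsq hu, hsq hv, hsq ht₀] at hmax
  linarith [hmax.trans (max_le (sub_le_iff_le_add'.2 hCu) (sub_le_iff_le_add'.2 hCv))]

lemma two_rpow_mul_rpow_le_of_mem_Icc (ha : 0 ≤ a) (hb : 0 ≤ b) (hp : 2 ≤ p)
    (ht : t ∈ Set.Icc |a - b| (a + b)) :
    2 ^ (2 - p) * t ^ p ≤ (a ^ (p - 2) + b ^ (p - 2)) / 2 * t ^ 2 +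
      (a ^ (p - 2) - b ^ (p - 2)) / 2 * (a ^ 2 - b ^ 2) := by
  have hpow {u : ℝ} (hu : 0 ≤ u) : u ^ (p - 1) = u ^ (p - 2) * u := by
    rw [← Real.rpow_add_one' hu (by linarith)]
    ring_nf
  refine mul_rpow_le_mul_sq_add_of_mem_Icc hp (by positivity) (abs_nonneg _) ht ?_ ?_
  · calc 2 ^ (2 - p) * |a - b| ^ p ≤ |a - b| ^ p :=
          mul_le_of_le_one_left (by positivity)
            (Real.rpow_le_one_of_one_le_of_nonpos one_le_two (by linarith))
      _ ≤ (a - b) * (a ^ (p - 1) - b ^ (p - 1)) := abs_sub_rpow_le_mul_rpow_sub_rpow ha hb hp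
      _ = _ := by
          rw [hpow ha, hpow hb, sq_abs]
          ring
  · calc 2 ^ (2 - p) * (a + b) ^ p ≤ (a + b) * (a ^ (p - 1) + b ^ (p - 1)) :=
          two_rpow_mul_add_rpow_le ha hb hp
      _ = _ := by
          rw [hpow ha, hpow hb]
          ring

end RealPower

section NormPower

variable {E : Type*} [NormedAddCommGroup E] [InnerProductSpace ℝ E] {p : ℝ}

lemma hasFDerivAt_norm_sub_rpow (c x : E) (hp : 1 < p) :
    HasFDerivAt (fun y ↦ ‖y - c‖ ^ p) (p • innerSL ℝ (‖x - c‖ ^ (p - 2) • (x - c))) x := by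
  rw [map_smul, smul_smul]
  exact (hasFDerivAt_norm_rpow (x - c) hp).comp x ((hasFDerivAt_id x).sub_const c)

lemma inner_smul_sub_smul_sub (α β : ℝ) (x y : E) :
    ⟪α • x - β • y, x - y⟫ =
      (α + β) / 2 * ‖x - y‖ ^ 2 + (α - β) / 2 * (‖x‖ ^ 2 - ‖y‖ ^ 2) := by
  rw [norm_sub_sq_real]
  simp only [inner_sub_left, inner_sub_right, real_inner_smul_left, real_inner_self_eq_norm_sq,
    real_inner_comm x y]
  ring

lemma two_rpow_mul_norm_sub_rpow_le_inner (hp : 2 ≤ p) (x y : E) :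
    2 ^ (2 - p) * ‖x - y‖ ^ p ≤ ⟪‖x‖ ^ (p - 2) • x - ‖y‖ ^ (p - 2) • y, x - y⟫ := by
  rw [inner_smul_sub_smul_sub]
  exact two_rpow_mul_rpow_le_of_mem_Icc (norm_nonneg x) (norm_nonneg y) hp
    ⟨abs_norm_sub_norm_le x y, norm_sub_le x y⟩

end NormPower

section Regularized

variable {E : Type*} [NormedAddCommGroup E] [InnerProductSpace ℝ E] {s : Set E} {f g : E → ℝ}
  {c z w : E} {γ p : ℝ} {φ ψ : StrongDual ℝ E}

lemma mul_norm_sub_rpow_le_hasFDerivWithinAt_sub_apply (hf : ConvexOn ℝ s f) (hγ : 0 ≤ γ)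
    (hp : 2 ≤ p) (hg : ∀ x ∈ s, g x = f x + γ / p * ‖x - c‖ ^ p) (hz : z ∈ s) (hw : w ∈ s)
    (hφ : HasFDerivWithinAt g φ s z) (hψ : HasFDerivWithinAt g ψ s w) :
    γ * 2 ^ (2 - p) * ‖z - w‖ ^ p ≤ (φ - ψ) (z - w) := by
  let G (x : E) : E := ‖x - c‖ ^ (p - 2) • (x - c)
  have hderiv {x : E} {χ : StrongDual ℝ E} (hx : x ∈ s) (hχ : HasFDerivWithinAt g χ s x) :
      HasFDerivWithinAt f (χ - γ • innerSL ℝ (G x)) s x := by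
    have hpow := ((hasFDerivAt_norm_sub_rpow c x (by linarith : 1 < p)).const_mul
      (γ / p)).hasFDerivWithinAt (s := s)
    rw [smul_smul, div_mul_cancel₀ γ (by linarith : p ≠ 0)] at hpow
    exact HasFDerivWithinAt.congr (hχ.sub hpow) (fun y hy ↦ by simp [hg y hy]) (by simp [hg x hx])
  have hmono := convexOn_hasFDerivWithinAt_sub_apply_sub_nonneg hf hz hw
    (hderiv hz hφ) (hderiv hw hψ)
  have hunif : 2 ^ (2 - p) * ‖z - w‖ ^ p ≤ ⟪G z - G w, z - w⟫ := by
    simpa only [sub_sub_sub_cancel_right] using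
      two_rpow_mul_norm_sub_rpow_le_inner hp (z - c) (w - c)
  calc γ * 2 ^ (2 - p) * ‖z - w‖ ^ p ≤ γ * ⟪G z - G w, z - w⟫ := by
        rw [mul_assoc]
        gcongr
    _ ≤ (φ - ψ) (z - w) := by
        simp only [sub_apply, smul_apply, innerSL_apply_apply, smul_eq_mul] at hmono
        rw [inner_sub_left, sub_apply]
        linarith

theorem cubic_regularized_grad_lower_bound_general (hf : ConvexOn ℝ s f) (hγ : 0 ≤ γ)
    (hp : 2 ≤ p) (hg : ∀ x ∈ s, g x = f x + γ / p * ‖x - c‖ ^ p) (hz : z ∈ s) (hw : w ∈ s)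
    (hφ : HasFDerivWithinAt g φ s z) (hψ : HasFDerivWithinAt g ψ s w) :
    γ * 2 ^ (2 - p) * ‖z - w‖ ^ (p - 1) ≤ ‖φ - ψ‖ := by
  rcases (norm_nonneg (z - w)).eq_or_lt with hzw | hzw
  · rw [← hzw, Real.zero_rpow (by linarith), mul_zero]
    exact norm_nonneg _
  refine le_of_mul_le_mul_right ?_ hzw
  calc γ * 2 ^ (2 - p) * ‖z - w‖ ^ (p - 1) * ‖z - w‖ = γ * 2 ^ (2 - p) * ‖z - w‖ ^ p := by
        rw [mul_assoc, ← Real.rpow_add_one hzw.ne', sub_add_cancel]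
    _ ≤ (φ - ψ) (z - w) :=
        mul_norm_sub_rpow_le_hasFDerivWithinAt_sub_apply hf hγ hp hg hz hw hφ hψ
    _ ≤ ‖φ - ψ‖ * ‖z - w‖ := (le_abs_self _).trans ((φ - ψ).le_opNorm _)

end Regularized

/-- Gradient-dominance-type bound for the cubic-regularized function: if `ẑ` is a
global minimizer of `g(w) = f(w) + (γ/3)‖w − z̄‖³` then
`‖∇g(z)‖ ≥ (γ/2)‖z − ẑ‖²` for every `z`. -/
theorem cubic_regularized_grad_lower_bound
    {E : Type*} [NormedAddCommGroup E] [InnerProductSpace ℝ E] [FiniteDimensional ℝ E]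
    (f : E → ℝ) (hconv : ConvexOn ℝ Set.univ f)
    (f' : E → E) (hgrad : ∀ x : E, HasGradientAt f (f' x) x)
    (zbar : E) (γ : ℝ) (hγ : 0 < γ)
    (g : E → ℝ) (hg : ∀ x : E, g x = f x + γ / 3 * ‖x - zbar‖ ^ 3)
    (g' : E → E) (hg' : ∀ x : E, HasGradientAt g (g' x) x)
    (zhat : E) (hmin : ∀ x : E, g zhat ≤ g x) :
    ∀ z : E, γ / 2 * ‖z - zhat‖ ^ 2 ≤ ‖g' z‖ := by
  intro z
  have hzhat : IsLocalMin g zhat := .of_forall hmin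
  have hcrit : HasFDerivAt g 0 zhat :=
    hzhat.hasFDerivAt_eq_zero (hg' zhat).hasFDerivAt ▸ (hg' zhat).hasFDerivAt
  calc γ / 2 * ‖z - zhat‖ ^ 2 = γ * 2 ^ ((2 : ℝ) - 3) * ‖z - zhat‖ ^ ((3 : ℝ) - 1) := by
        norm_num [Real.rpow_neg_one, div_eq_mul_inv]
    _ ≤ ‖InnerProductSpace.toDual ℝ E (g' z) - 0‖ :=
        cubic_regularized_grad_lower_bound_general hconv hγ.le (by norm_num)
          (fun x _ ↦ by exact_mod_cast hg x) (Set.mem_univ z) (Set.mem_univ zhat)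
          (hg' z).hasFDerivAt.hasFDerivWithinAt hcrit.hasFDerivWithinAt
    _ = ‖g' z‖ := by rw [sub_zero, LinearIsometryEquiv.norm_map]
end
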